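/- Let M be the 27 × 27 integer matrix obtained by stacking vertically the three Kronecker products r ⊗ I₃ ⊗ I₃, I₃ ⊗ r ⊗ I₃, and I₃ ⊗ I₃ ⊗ r, where I₃ is the 3 × 3 identity matrix and r = (1, 1, 1). Let x_p = (0,1,0,1,50,1,0,1,1,0,52,0,52,2706,53,0,53,52,0,1,1,1,105,0,1,0,1) ∈ ℤ²⁷. Then the set of vectors x ∈ ℤ²⁷ with all coordinates nonnegative satisfying M x = M x_p, x₂₇ = 1, and x₉ = 1 has exactly 9 elements. -/

import Mathlib

/-!
The 27 equations of `M x = M x_p` prescribe the sums of `x`, viewed as a `3 × 3 × 3` array, along all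
27 axis-parallel lines (`M_mulVec_apply`). The integer kernel of `M` has rank 8, so a solution is
determined by its eight corners `x_{ijk}` with `i, j, k ∈ {1, 3}`. The line sum through `(1,1,1)` and
`(3,1,1)` is `0`, so these two corners vanish, and the two extra constraints fix the corners
`(1,3,3)` and `(3,3,3)`. This leaves the corners `a = x_{113}`, `b = x_{131}`, `c = x_{313}`,
`d = x_{331}`, and the array they determine (`sol`) is nonnegative exactly when `a, b, c, d ≥ 0`,
`a + c ≤ 1` and `b + d ≤ 1`. There are three choices for each of the pairs `(a, c)` and `(b, d)`,
hence `3 · 3 = 9` solutions.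
-/


open Matrix Kronecker

/-- The 1 × 3 all-ones row vector `r = (1, 1, 1)`. -/
def rOnes : Matrix (Fin 1) (Fin 3) ℤ := Matrix.of fun _ _ => 1

/-- Lexicographic identification of index triples `(i₁, i₂, i₃)` with `Fin 27`
(first coordinate most significant), matching the lexicographic ordering of the triples
`(i₁, i₂, i₃) ∈ {1, 2, 3}³` used to index the 27 coordinates. -/
def colEquiv : (Fin 3 × Fin 3) × Fin 3 ≃ Fin 27 :=
  (Equiv.prodCongr finProdFinEquiv (Equiv.refl (Fin 3))).trans finProdFinEquiv

def rowEquiv1 : (Fin 1 × Fin 3) × Fin 3 ≃ Fin 9 :=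
  (Equiv.prodCongr finProdFinEquiv (Equiv.refl (Fin 3))).trans finProdFinEquiv

def rowEquiv2 : (Fin 3 × Fin 1) × Fin 3 ≃ Fin 9 :=
  (Equiv.prodCongr finProdFinEquiv (Equiv.refl (Fin 3))).trans finProdFinEquiv

def rowEquiv3 : (Fin 3 × Fin 3) × Fin 1 ≃ Fin 9 :=
  (Equiv.prodCongr finProdFinEquiv (Equiv.refl (Fin 1))).trans finProdFinEquiv

/-- The 27 × 27 matrix obtained by stacking vertically the three Kronecker products
`r ⊗ I₃ ⊗ I₃`, `I₃ ⊗ r ⊗ I₃` and `I₃ ⊗ I₃ ⊗ r`, where `I₃` is the 3 × 3 identity matrix and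
`r = (1, 1, 1)` is the 1 × 3 all-ones row, with columns indexed lexicographically by triples. -/
def M : Matrix (Fin 27) (Fin 27) ℤ :=
  Matrix.reindex
    ((rowEquiv1.sumCongr (rowEquiv2.sumCongr rowEquiv3)).trans
      (((Equiv.refl (Fin 9)).sumCongr finSumFinEquiv).trans finSumFinEquiv))
    colEquiv
    (Matrix.fromRows
      (rOnes ⊗ₖ (1 : Matrix (Fin 3) (Fin 3) ℤ) ⊗ₖ (1 : Matrix (Fin 3) (Fin 3) ℤ))
      (Matrix.fromRows
        ((1 : Matrix (Fin 3) (Fin 3) ℤ) ⊗ₖ rOnes ⊗ₖ (1 : Matrix (Fin 3) (Fin 3) ℤ))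
        ((1 : Matrix (Fin 3) (Fin 3) ℤ) ⊗ₖ (1 : Matrix (Fin 3) (Fin 3) ℤ) ⊗ₖ rOnes)))

/-- The particular solution of block 322 (coordinates indexed lexicographically by triples,
coordinate 27 corresponding to (3,3,3)). -/
def xp : Fin 27 → ℤ := ![0,1,0,1,50,1,0,1,1,0,52,0,52,2706,53,0,53,52,0,1,1,1,105,0,1,0,1]

/-- The `t`-th point of the `i`-th axis-parallel line of the `3 × 3 × 3` array, in the order of the
rows of `M`: rows `0`-`8` run in the first direction, `9`-`17` in the second, `18`-`26` in the third. -/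
def linePoint (i : Fin 27) (t : Fin 3) : Fin 27 :=
  if i.val < 9 then Fin.ofNat 27 (i.val + 9 * t.val)
  else if i.val < 18 then Fin.ofNat 27 (9 * ((i.val - 9) / 3) + 3 * t.val + i.val % 3)
  else Fin.ofNat 27 (3 * (i.val - 18) + t.val)

lemma M_apply (i j : Fin 27) : M i j = ∑ t : Fin 3, if j = linePoint i t then 1 else 0 := by
  have h : ∀ i j : Fin 27,
      M i j - (∑ t : Fin 3, if j = linePoint i t then 1 else 0 : ℤ) = 0 := by
    simp only [Fin.sum_univ_three]
    decide +kernel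
  exact sub_eq_zero.1 (h i j)

/-- The `i`-th coordinate of `M x` is the sum of `x` along the `i`-th line. -/
lemma M_mulVec_apply (x : Fin 27 → ℤ) (i : Fin 27) :
    M.mulVec x i = x (linePoint i 0) + x (linePoint i 1) + x (linePoint i 2) := by
  simp only [Matrix.mulVec, dotProduct, M_apply, Finset.sum_mul]
  rw [Finset.sum_comm]
  simp [Fin.sum_univ_three]

/-- The array with the line sums of `xp` and corners `x_{111} = x_{311} = 0`,
`x_{133} = x_{333} = 1`, `x_{113} = a`, `x_{131} = b`, `x_{313} = c`, `x_{331} = d`, where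
`p = ((a, c), (b, d))`. -/
def sol (p : (ℤ × ℤ) × (ℤ × ℤ)) : Fin 27 → ℤ :=
  let a := p.1.1
  let c := p.1.2
  let b := p.2.1
  let d := p.2.2
  ![0, 1 - a, a,
    1 - b, 50 + a + b, 1 - a,
    b, 1 - b, 1,
    0, 51 + a + c, 1 - a - c,
    51 + b + d, 2708 - a - b - c - d, 52 + a + c,
    1 - b - d, 52 + b + d, 52,
    0, 2 - c, c,
    2 - d, 103 + c + d, 1 - c,
    d, 1 - d, 1]

/-- The pairs of nonnegative integers with sum at most `1`. -/
def smallPairs : Finset (ℤ × ℤ) := {(0, 0), (0, 1), (1, 0)}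

lemma mem_smallPairs (u v : ℤ) : (u, v) ∈ smallPairs ↔ 0 ≤ u ∧ 0 ≤ v ∧ u + v ≤ 1 := by
  simp only [smallPairs, Finset.mem_insert, Finset.mem_singleton, Prod.mk.injEq]
  omega

/-- The parameters are four of the coordinates of `sol p`. -/
lemma sol_injective : Function.Injective sol := by
  rintro ⟨⟨a, c⟩, b, d⟩ ⟨⟨a', c'⟩, b', d'⟩ h
  have ha : a = a' := congrFun h 2
  have hb : b = b' := congrFun h 6
  have hc : c = c' := congrFun h 20
  have hd : d = d' := congrFun h 24
  subst ha hb hc hd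
  rfl

lemma M_mulVec_sol (p : (ℤ × ℤ) × (ℤ × ℤ)) : M.mulVec (sol p) = M.mulVec xp := by
  obtain ⟨⟨a, c⟩, b, d⟩ := p
  funext i
  rw [M_mulVec_apply, M_mulVec_apply]
  fin_cases i <;> simp [linePoint, sol, xp, Fin.ofNat] <;> ring

lemma sol_nonneg {a b c d : ℤ} (h : (a, c) ∈ smallPairs) (h' : (b, d) ∈ smallPairs) (i : Fin 27) :
    0 ≤ sol ((a, c), (b, d)) i := by
  rw [mem_smallPairs] at h h'
  fin_cases i <;> simp [sol] <;> omega

/-- A nonnegative solution is recovered from its corners. -/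
lemma eq_sol {x : Fin 27 → ℤ} (h0 : ∀ i, 0 ≤ x i) (hM : M.mulVec x = M.mulVec xp)
    (h26 : x 26 = 1) (h8 : x 8 = 1) :
    x = sol ((x 2, x 20), (x 6, x 24)) ∧
      (x 2, x 20) ∈ smallPairs ∧ (x 6, x 24) ∈ smallPairs := by
  have key : ∀ i, x (linePoint i 0) + x (linePoint i 1) + x (linePoint i 2) =
      xp (linePoint i 0) + xp (linePoint i 1) + xp (linePoint i 2) := fun i => by
    rw [← M_mulVec_apply, ← M_mulVec_apply, hM]
  have e0 : x 0 + x 9 + x 18 = 0 := key 0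
  have e1 : x 1 + x 10 + x 19 = 54 := key 1
  have e2 : x 2 + x 11 + x 20 = 1 := key 2
  have e3 : x 3 + x 12 + x 21 = 54 := key 3
  have e4 : x 4 + x 13 + x 22 = 2861 := key 4
  have e5 : x 5 + x 14 + x 23 = 54 := key 5
  have e6 : x 6 + x 15 + x 24 = 1 := key 6
  have e7 : x 7 + x 16 + x 25 = 54 := key 7
  have e8 : x 8 + x 17 + x 26 = 54 := key 8
  have e9 : x 0 + x 3 + x 6 = 1 := key 9
  have e10 : x 1 + x 4 + x 7 = 52 := key 10
  have e11 : x 2 + x 5 + x 8 = 2 := key 11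
  have e12 : x 9 + x 12 + x 15 = 52 := key 12
  have e13 : x 10 + x 13 + x 16 = 2811 := key 13
  have e14 : x 11 + x 14 + x 17 = 105 := key 14
  have e15 : x 18 + x 21 + x 24 = 2 := key 15
  have e16 : x 19 + x 22 + x 25 = 106 := key 16
  have e17 : x 20 + x 23 + x 26 = 2 := key 17
  have e18 : x 0 + x 1 + x 2 = 1 := key 18
  have e19 : x 3 + x 4 + x 5 = 52 := key 19
  have e20 : x 6 + x 7 + x 8 = 2 := key 20
  have e21 : x 9 + x 10 + x 11 = 52 := key 21
  have e22 : x 12 + x 13 + x 14 = 2811 := key 22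
  have e23 : x 15 + x 16 + x 17 = 105 := key 23
  have e24 : x 18 + x 19 + x 20 = 2 := key 24
  have e25 : x 21 + x 22 + x 23 = 106 := key 25
  have e26 : x 24 + x 25 + x 26 = 2 := key 26
  have n0 := h0 0
  have n18 := h0 18
  have n9 := h0 9
  have n11 := h0 11
  have n15 := h0 15
  refine ⟨?_, ?_, ?_⟩
  · funext i
    fin_cases i <;> simp [sol] <;> omega
  · rw [mem_smallPairs]
    exact ⟨h0 2, h0 20, by omega⟩
  · rw [mem_smallPairs]
    exact ⟨h0 6, h0 24, by omega⟩

/-- The set of nonnegative integer vectors \`x\` with \`M x = M x_p\`, \`x₂₇ = 1\` and \`x₉ = 1\` (block 322) has exactly 9 elements. -/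
theorem block322_solution_count :
    {x : Fin 27 → ℤ | (∀ i, 0 ≤ x i) ∧ M.mulVec x = M.mulVec xp ∧ x 26 = 1 ∧ x 8 = 1}.ncard = 9 := by
  have hset : {x : Fin 27 → ℤ | (∀ i, 0 ≤ x i) ∧ M.mulVec x = M.mulVec xp ∧ x 26 = 1 ∧ x 8 = 1} =
      sol '' ((smallPairs ×ˢ smallPairs : Finset ((ℤ × ℤ) × (ℤ × ℤ))) : Set _) := by
    ext x
    constructor
    · rintro ⟨h0, hM, h26, h8⟩
      obtain ⟨hx, h, h'⟩ := eq_sol h0 hM h26 h8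
      exact ⟨_, Finset.mem_coe.2 (Finset.mk_mem_product h h'), hx.symm⟩
    · rintro ⟨⟨⟨a, c⟩, b, d⟩, hp, rfl⟩
      obtain ⟨h, h'⟩ := Finset.mem_product.1 (Finset.mem_coe.1 hp)
      exact ⟨sol_nonneg h h', M_mulVec_sol _, rfl, rfl⟩
  rw [hset, Set.ncard_image_of_injective _ sol_injective, Set.ncard_coe_finset]
  rfl
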